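/- Let c : T → ℂ be even with absolutely summable Fourier coefficients and admit the factorization c(e^{iθ}) = c₊(e^{−iθ}) · G · c₊(e^{iθ}), where c₊(z) = Σ_{k≥0} γ_k z^k with Σ|γ_k| < ∞, c₊(0) = 1, c₊ nonvanishing on the closed unit disk, and G ∈ ℂ. Define b ∈ L¹[−1,1] by b(cos θ) = c(e^{iθ}) and ψ(e^{iθ}) = c₊(e^{−iθ}) c₊(e^{iθ})^{−1} χ(e^{iθ}). Then any bounded operator I + H(ψ) on ℓ²(ℕ) (with entries δ_{jk} + ψ_{j+k+1}) is invertible, and for every n ≥ 1: det H_n[b] = G^n · det[P_n (I + H(ψ))^{−1} P_n]. -/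

import Mathlib

open Filter MeasureTheory
open scoped InnerProductSpace

noncomputable section

/-- ℓ²(ℕ) over ℂ. -/
abbrev l2 : Type := lp (fun _ : ℕ => ℂ) 2

/-- The `k`-th Fourier coefficient of a function on the unit circle, given as a
`2π`-periodic function of the angle: `a_k = (1/(2π)) ∫_0^{2π} f(θ) e^{-ikθ} dθ`. -/
def fc (f : ℝ → ℂ) (k : ℤ) : ℂ :=
  ((1 / (2 * Real.pi) : ℝ) : ℂ) *
    ∫ θ in (0:ℝ)..(2 * Real.pi), f θ * Complex.exp (-(Complex.I * k * θ))

/-- The standard orthonormal basis vector `e_j` of ℓ²(ℕ). -/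
def ee (j : ℕ) : l2 := lp.single 2 j 1

/-- Matrix entry `⟨e_j, A e_k⟩` of an operator on ℓ²(ℕ). -/
def ent (A : l2 →L[ℂ] l2) (j k : ℕ) : ℂ := ⟪ee j, A (ee k)⟫_ℂ

/-- The function `χ` on the circle: `χ(e^{iθ}) = i` for `0 < θ < π` and
`χ(e^{iθ}) = −i` for `−π < θ < 0`. -/
def chi (θ : ℝ) : ℂ := if 0 < Real.sin θ then Complex.I else -Complex.I

/-- The Hankel-matrix entry `b_{m}` with `m = e + 1`:
`bmom b e = (1/π) ∫_{-1}^1 b(x)(2x)^e dx`. -/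
def bmom (b : ℝ → ℂ) (e : ℕ) : ℂ :=
  ((1 / Real.pi : ℝ) : ℂ) * ∫ x in (-1:ℝ)..1, b x * (2 * (x : ℂ)) ^ e

section Algebra

variable {H L : Type*} [AddCommGroup H] [Module ℂ H] [AddCommGroup L] [Module ℂ L]

/-- The algebraic data behind the inversion of `1 + H(ψ)`: an embedding `J` with left inverse `K`,
a flip `R` exchanging the range of `J` with the kernel of `K`, an involution `S` anticommuting
with `R`, and an invertible `a` preserving the range of `J`. -/
structure FlipData (J : H →ₗ[ℂ] L) (K : L →ₗ[ℂ] H) (R S a ai : L →ₗ[ℂ] L) (B B' : H →ₗ[ℂ] H) :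
    Prop where
  KJ : ∀ x, K (J x) = x
  split : ∀ v, J (K v) + R (J (K (R v))) = v
  RR : ∀ v, R (R v) = v
  SS : ∀ v, S (S v) = v
  SR : ∀ v, S (R v) = -R (S v)
  B_apply : ∀ x, B x = x + K (S (J x))
  BB' : ∀ x, B (B' x) = x
  B'B : ∀ x, B' (B x) = x
  a_ai : ∀ v, a (ai v) = v
  ai_a : ∀ v, ai (a v) = v
  S_a : ∀ v, S (a v) = R (a (R (S v)))
  comm : ∀ v, a (R (a (R v))) = R (a (R (a v)))
  KRaJ : ∀ x, K (R (a (J x))) = 0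
  KRaiJ : ∀ x, K (R (ai (J x))) = 0

namespace FlipData

variable {J : H →ₗ[ℂ] L} {K : L →ₗ[ℂ] H} {R S a ai : L →ₗ[ℂ] L} {B B' : H →ₗ[ℂ] H}

/-- A vector fixed by `S` is determined by its image under `K`. -/
theorem eq_of_fixed (h : FlipData J K R S a ai B B') {v : L} (hv : S v = v) :
    J (B' (K v)) + S (J (B' (K v))) = v := by
  set u := B' (K v) with hu
  set w := J u + S (J u) - v with hw
  have hSw : S w = w := by simp only [hw, map_sub, map_add, h.SS, hv]; abel
  have hKw : K w = 0 := by
    simp only [hw, map_sub, map_add, h.KJ, ← h.B_apply, hu, h.BB', sub_self]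
  set g := K (R w) with hg
  have hwg : w = R (J g) := by simpa [hKw] using (h.split w).symm
  have h1 : J g + S (J g) = 0 := by
    have h2 : -R (S (J g)) = R (J g) := by rw [← h.SR, ← hwg, hSw]
    have h3 := congrArg R h2
    rw [map_neg, h.RR, h.RR] at h3
    calc J g + S (J g) = -S (J g) + S (J g) := by rw [h3]
      _ = 0 := neg_add_cancel _
  have hBg : B g = 0 := by
    rw [h.B_apply]
    simpa [h.KJ] using congrArg K h1
  have hg0 : g = 0 := by rw [← h.B'B g, hBg, map_zero]
  have : w = 0 := by rw [hwg, hg0, map_zero, map_zero]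
  exact sub_eq_zero.mp this

theorem JKaJ (h : FlipData J K R S a ai B B') (x : H) : J (K (a (J x))) = a (J x) := by
  simpa [h.KRaJ] using h.split (a (J x))

theorem JKaiJ (h : FlipData J K R S a ai B B') (x : H) : J (K (ai (J x))) = ai (J x) := by
  simpa [h.KRaiJ] using h.split (ai (J x))

theorem KRaR (h : FlipData J K R S a ai B B') (v : L) :
    K (R (a (R (J (K v))))) = K (R (a (R v))) := by
  conv_rhs => rw [← h.split v]
  simp [h.RR, h.KRaJ]

theorem KRaiR (h : FlipData J K R S a ai B B') (v : L) :
    K (R (ai (R (J (K v))))) = K (R (ai (R v))) := by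
  conv_rhs => rw [← h.split v]
  simp [h.RR, h.KRaiJ]

theorem S_RaR (h : FlipData J K R S a ai B B') (v : L) : S (R (a (R v))) = a (S v) := by
  rw [h.SR, h.S_a, h.RR, h.SR]
  simp [h.RR]

theorem S_ai (h : FlipData J K R S a ai B B') (v : L) : S (ai v) = R (ai (R (S v))) := by
  conv_rhs => rw [← h.a_ai v, h.S_a]
  simp [h.RR, h.ai_a]

theorem S_RaiR (h : FlipData J K R S a ai B B') (v : L) : S (R (ai (R v))) = ai (S v) := by
  rw [h.SR, h.S_ai, h.RR, h.SR]
  simp [h.RR]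

theorem inv_comm (h : FlipData J K R S a ai B B') (v : L) :
    ai (R (a (R v))) = R (a (R (ai v))) := by
  rw [← h.ai_a (R (a (R (ai v)))), h.comm, h.a_ai]

theorem inv_comm' (h : FlipData J K R S a ai B B') (v : L) :
    R (ai (R (a v))) = a (R (ai (R v))) := by
  have := h.comm (R (ai (R v)))
  simp only [h.RR, h.a_ai] at this
  rw [this]
  simp [h.RR, h.ai_a]

theorem S_even (h : FlipData J K R S a ai B B') {v : L} (hv : S v = v) :
    S (a (R (a (R v)))) = a (R (a (R v))) := by
  rw [h.S_a, h.S_RaR, hv, h.comm]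

theorem S_even_inv (h : FlipData J K R S a ai B B') {v : L} (hv : S v = v) :
    S (R (ai (R (ai v)))) = R (ai (R (ai v))) := by
  rw [h.S_RaiR, h.S_ai, hv]
  have := h.inv_comm' (ai v)
  rw [h.a_ai] at this
  rw [this, h.ai_a]

theorem right_inv (h : FlipData J K R S a ai B B') (z : H) {v : L} {x : H}
    (hv : v = J (B' (K (R (ai (R (J z)))))) + S (J (B' (K (R (ai (R (J z))))))))
    (hx : x = K (ai (J (B' (K (a (R (a (R v))))))))) :
    x + K (R (a (R (ai (S (J x)))))) = z := by
  have hSv : S v = v := by rw [hv, map_add, h.SS]; abel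
  have hKv : K v = K (R (ai (R (J z)))) := by
    rw [hv, map_add, h.KJ, ← h.B_apply, h.BB']
  set w := a (R (a (R v))) with hw
  have hu := h.eq_of_fixed (h.S_even hSv)
  rw [← hw] at hu
  set u := B' (K w)
  have hJx : J x = ai (J u) := by rw [hx, h.JKaiJ]
  have hK : x = K (ai (J u)) := hx
  rw [hJx, h.S_ai, ← h.inv_comm (R (ai (R (S (J u))))), h.RR, h.a_ai, h.RR]
  conv_lhs => rw [hK, ← map_add, ← map_add, hu, hw, h.ai_a]
  rw [← h.KRaR, hKv, h.KRaR, h.RR, h.a_ai, h.RR, h.KJ]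

theorem left_inv (h : FlipData J K R S a ai B B') (x : H) {v : L} {z : H}
    (hz : z = x + K (R (a (R (ai (S (J x)))))))
    (hv : v = J (B' (K (R (ai (R (J z)))))) + S (J (B' (K (R (ai (R (J z)))))))) :
    K (ai (J (B' (K (a (R (a (R v)))))))) = x := by
  set u := K (a (J x)) with hu
  have hJu : J u = a (J x) := h.JKaJ x
  have hJx : J x = ai (J u) := by rw [hJu, h.ai_a]
  set w := J u + S (J u) with hw
  have hSw : S w = w := by rw [hw, map_add, h.SS, add_comm]
  have hzw : z = K (ai w) := by
    rw [hz, hJx, h.S_ai, ← h.inv_comm (R (ai (R (S (J u))))), h.RR, h.a_ai, h.RR, hw, map_add,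
      map_add, ← hJx, h.KJ]
  have hvw : v = R (ai (R (ai w))) := by
    rw [hv, hzw, h.KRaiR]
    exact h.eq_of_fixed (h.S_even_inv hSw)
  have hw' : a (R (a (R v))) = w := by rw [hvw, h.RR, h.a_ai, h.RR, h.a_ai]
  rw [hw', hw, map_add, h.KJ, ← h.B_apply, h.B'B, ← hJx, h.KJ]

/-- Conjugating the inverse of `1 + K (R a R) a⁻¹ S J` by the triangular operators `K a J` and
`K (R a R) J` removes the inverses of `a`. -/
theorem conj_inv (h : FlipData J K R S a ai B B') (x : H) {z : H} (hz : z = K (R (a (R (J x)))))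
    {v : L} (hv : v = J (B' (K (R (ai (R (J z)))))) + S (J (B' (K (R (ai (R (J z)))))))) :
    K (a (J (K (ai (J (B' (K (a (R (a (R v)))))))))))
      = B' (K (a (R (a (R (J (B' x) + S (J (B' x)))))))) := by
  have h1 : K (R (ai (R (J z)))) = x := by
    rw [hz, h.KRaiR, h.RR, h.ai_a, h.RR, h.KJ]
  rw [h.JKaiJ, h.a_ai, h.KJ, hv, h1]

end FlipData

end Algebra

section Circle

instance fact_two_pi_pos : Fact (0 < 2 * Real.pi) := ⟨Real.two_pi_pos⟩

/-- The circle `ℝ / 2πℤ`. -/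
abbrev Circ : Type := AddCircle (2 * Real.pi)

/-- Normalized Haar measure on the circle. -/
abbrev haar : Measure Circ := AddCircle.haarAddCircle

/-- `L²` of the circle. -/
abbrev L2T : Type := Lp ℂ 2 haar

/-- The coordinate `e^{iθ}` on the circle. -/
def zeta (x : Circ) : ℂ := fourier 1 x

theorem continuous_zeta : Continuous zeta := (fourier 1).continuous

theorem norm_zeta (x : Circ) : ‖zeta x‖ = 1 := by
  rw [zeta, fourier_one]; exact Circle.norm_coe _

theorem zeta_ne_zero (x : Circ) : zeta x ≠ 0 := by
  rw [← norm_pos_iff, norm_zeta]; exact one_pos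

theorem conj_zeta (x : Circ) : (starRingEnd ℂ) (zeta x) = (zeta x)⁻¹ := by
  rw [Complex.inv_def, Complex.normSq_eq_norm_sq, norm_zeta]; simp

theorem zeta_neg (x : Circ) : zeta (-x) = (zeta x)⁻¹ := by
  rw [← conj_zeta, zeta, zeta, ← fourier_neg, fourier_apply, fourier_apply]; simp

theorem fourier_eq_zpow (n : ℤ) (x : Circ) : fourier n x = zeta x ^ n := by
  rw [zeta, fourier_apply, fourier_one, AddCircle.toCircle_zsmul]; simp

theorem zeta_coe (θ : ℝ) : zeta (θ : Circ) = Complex.exp (Complex.I * θ) := by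
  rw [zeta, fourier_coe_apply]
  congr 1
  have : (Real.pi : ℂ) ≠ 0 := by exact_mod_cast Real.pi_ne_zero
  push_cast
  field_simp

theorem integral_haar (f : Circ → ℂ) :
    ∫ x, f x ∂haar = ((1 / (2 * Real.pi) : ℝ) : ℂ) * ∫ θ in (0:ℝ)..(2 * Real.pi), f θ := by
  rw [AddCircle.integral_haarAddCircle]
  have := AddCircle.intervalIntegral_preimage (2 * Real.pi) 0 f
  rw [zero_add] at this
  rw [this, Complex.real_smul, one_div]

instance : NullSingletonClass haar where
  measure_singleton x := by
    have h : volume {x} = 0 := by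
      have := AddCircle.volume_closedBall (2 * Real.pi) (x := x) 0
      rwa [Metric.closedBall_zero, mul_zero, min_eq_right Real.two_pi_pos.le,
        ENNReal.ofReal_zero] at this
    rw [AddCircle.volume_eq_smul_haarAddCircle, Measure.smul_apply, smul_eq_mul, mul_eq_zero] at h
    exact h.resolve_left (ENNReal.ofReal_pos.mpr Real.two_pi_pos).ne'

theorem integral_haar_neg (f : Circ → ℂ) : ∫ x, f (-x) ∂haar = ∫ x, f x ∂haar :=
  integral_neg_eq_self f haar

theorem integral_analytic {Φ : ℂ → ℂ} (hΦ : DiffContOnCl ℂ Φ (Metric.ball 0 1)) :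
    ∫ x, Φ (zeta x) ∂haar = Φ 0 := by
  have h := DiffContOnCl.circleAverage (f := Φ) (c := 0) (R := 1) (by simpa using hΦ)
  rw [← h, integral_haar, Real.circleAverage_def, Complex.real_smul, one_div]
  simp only [zeta_coe, circleMap, mul_comm Complex.I, Complex.ofReal_one, one_mul, zero_add]

theorem injective_zeta : Function.Injective zeta := by
  intro x y hxy
  rw [zeta, zeta, fourier_one, fourier_one] at hxy
  exact AddCircle.injective_toCircle Real.two_pi_pos.ne' (Subtype.ext hxy)

theorem ae_im_zeta_ne_zero : ∀ᵐ x ∂haar, (zeta x).im ≠ 0 := by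
  have hfin : {x : Circ | (zeta x).im = 0}.Finite := by
    refine (((Set.finite_singleton (-1 : ℂ)).insert 1).preimage injective_zeta.injOn).subset ?_
    intro x hx
    have hn := Complex.normSq_eq_norm_sq (zeta x)
    rw [norm_zeta, Complex.normSq_apply, show (zeta x).im = 0 from hx] at hn
    have : (zeta x).re = 1 ∨ (zeta x).re = -1 := by
      rw [← sq_eq_one_iff]; linarith
    rcases this with h | h
    · exact Or.inl (Complex.ext h hx)
    · exact Or.inr (Complex.ext (by simpa using h) (by simpa using hx))
  simpa [ae_iff] using hfin.measure_zero haar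

end Circle

section Operators

theorem ae_comp_neg {p : Circ → Prop} (h : ∀ᵐ x ∂haar, p x) : ∀ᵐ x ∂haar, p (-x) :=
  (Measure.measurePreserving_neg haar).quasiMeasurePreserving.ae h

/-- Multiplication by a bounded function on `L²` of the circle. -/
def mulOp (m : Circ → ℂ) (hm : MemLp m ⊤ haar) : L2T →L[ℂ] L2T :=
  (ContinuousLinearMap.mul ℂ ℂ).holderL haar ⊤ 2 2 (hm.toLp m)

theorem mulOp_ae {m : Circ → ℂ} (hm : MemLp m ⊤ haar) (f : L2T) :
    mulOp m hm f =ᵐ[haar] fun x => m x * f x := by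
  filter_upwards [(ContinuousLinearMap.mul ℂ ℂ).coeFn_holder (r := 2) (hm.toLp m) f,
    hm.coeFn_toLp] with x h1 h2
  rw [← h2]
  exact h1

/-- The reflection `f ↦ f (-·)` on `L²` of the circle. -/
def negOp : L2T →L[ℂ] L2T :=
  (Lp.compMeasurePreservingₗᵢ ℂ (fun x : Circ => -x)
    (Measure.measurePreserving_neg haar)).toContinuousLinearMap

theorem negOp_ae (f : L2T) : negOp f =ᵐ[haar] fun x => f (-x) :=
  Lp.coeFn_compMeasurePreserving f (Measure.measurePreserving_neg haar)

theorem memLp_top_of_continuous {m : Circ → ℂ} (hm : Continuous m) : MemLp m ⊤ haar := by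
  obtain ⟨C, hC⟩ := isCompact_univ.exists_bound_of_continuousOn hm.continuousOn
  exact memLp_top_of_bound hm.aestronglyMeasurable C
    (Eventually.of_forall fun x => hC x (Set.mem_univ x))

theorem memLp_zeta_inv : MemLp (fun x => (zeta x)⁻¹) ⊤ haar :=
  memLp_top_of_continuous (continuous_zeta.inv₀ zeta_ne_zero)

/-- The flip `f ↦ t⁻¹ f(t⁻¹)`. -/
def flipOp : L2T →L[ℂ] L2T := mulOp _ memLp_zeta_inv ∘L negOp

theorem flipOp_ae (f : L2T) : flipOp f =ᵐ[haar] fun x => (zeta x)⁻¹ * f (-x) := by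
  filter_upwards [mulOp_ae memLp_zeta_inv (negOp f), negOp_ae f] with x h1 h2
  rw [← h2]
  exact h1

/-- The sign function `χ` on the circle. -/
def sgnC (x : Circ) : ℂ := if 0 < (zeta x).im then Complex.I else -Complex.I

theorem norm_sgnC (x : Circ) : ‖sgnC x‖ = 1 := by
  unfold sgnC; split_ifs <;> simp

theorem sgnC_sq (x : Circ) : sgnC x * sgnC x = -1 := by
  unfold sgnC; split_ifs <;> simp

theorem conj_sgnC (x : Circ) : (starRingEnd ℂ) (sgnC x) = -sgnC x := by
  unfold sgnC; split_ifs <;> simp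

theorem zeta_neg_im (x : Circ) : (zeta (-x)).im = -(zeta x).im := by
  rw [zeta_neg, ← conj_zeta, Complex.conj_im]

theorem sgnC_neg {x : Circ} (hx : (zeta x).im ≠ 0) : sgnC (-x) = -sgnC x := by
  unfold sgnC
  rw [zeta_neg_im]
  rcases lt_or_gt_of_ne hx with h | h
  · simp [h, not_lt_of_gt h]
  · simp [h, not_lt_of_gt h]

theorem measurable_sgnC : Measurable sgnC :=
  Measurable.ite
    (measurableSet_lt measurable_const (Complex.measurable_im.comp continuous_zeta.measurable))
    measurable_const measurable_const

theorem memLp_sgnC : MemLp sgnC ⊤ haar :=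
  memLp_top_of_bound measurable_sgnC.aestronglyMeasurable 1
    (Eventually.of_forall fun x => (norm_sgnC x).le)

/-- The symmetry `f ↦ χ(t) t⁻¹ f(t⁻¹)`. -/
def symOp : L2T →L[ℂ] L2T := mulOp _ memLp_sgnC ∘L flipOp

theorem symOp_ae (f : L2T) : symOp f =ᵐ[haar] fun x => sgnC x * ((zeta x)⁻¹ * f (-x)) := by
  filter_upwards [mulOp_ae memLp_sgnC (flipOp f), flipOp_ae f] with x h1 h2
  rw [← h2]
  exact h1

theorem flipOp_flipOp (f : L2T) : flipOp (flipOp f) = f := by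
  apply Lp.ext
  filter_upwards [flipOp_ae (flipOp f), ae_comp_neg (flipOp_ae f)] with x h1 h2
  rw [h1, h2, zeta_neg, neg_neg]
  field_simp [zeta_ne_zero x]

theorem symOp_symOp (f : L2T) : symOp (symOp f) = f := by
  apply Lp.ext
  filter_upwards [symOp_ae (symOp f), ae_comp_neg (symOp_ae f), ae_im_zeta_ne_zero]
    with x h1 h2 h3
  rw [h1, h2, zeta_neg, neg_neg, sgnC_neg h3]
  have := sgnC_sq x
  have hz := zeta_ne_zero x
  field_simp
  linear_combination (-f x) * this

theorem symOp_flipOp (f : L2T) : symOp (flipOp f) = -flipOp (symOp f) := by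
  apply Lp.ext
  filter_upwards [symOp_ae (flipOp f), ae_comp_neg (flipOp_ae f), flipOp_ae (symOp f),
    ae_comp_neg (symOp_ae f), ae_im_zeta_ne_zero, Lp.coeFn_neg (flipOp (symOp f))]
    with x h1 h2 h3 h4 h5 h6
  rw [h6, Pi.neg_apply, h1, h2, h3, h4, zeta_neg, neg_neg, sgnC_neg h5]
  ring

theorem flip_mul_flip_ae {m : Circ → ℂ} (hm : MemLp m ⊤ haar) (f : L2T) :
    flipOp (mulOp m hm (flipOp f)) =ᵐ[haar] fun x => m (-x) * f x := by
  filter_upwards [flipOp_ae (mulOp m hm (flipOp f)), ae_comp_neg (mulOp_ae hm (flipOp f)),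
    ae_comp_neg (flipOp_ae f)] with x h1 h2 h3
  rw [h1, h2, h3, zeta_neg, neg_neg]
  have hz := zeta_ne_zero x
  field_simp

theorem symOp_mulOp {m : Circ → ℂ} (hm : MemLp m ⊤ haar) (f : L2T) :
    symOp (mulOp m hm f) = flipOp (mulOp m hm (flipOp (symOp f))) := by
  apply Lp.ext
  filter_upwards [symOp_ae (mulOp m hm f), ae_comp_neg (mulOp_ae hm f),
    flip_mul_flip_ae hm (symOp f), symOp_ae f] with x h1 h2 h3 h4
  rw [h1, h2, h3, h4]
  ring

theorem mulOp_flip_comm {m : Circ → ℂ} (hm : MemLp m ⊤ haar) (f : L2T) :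
    mulOp m hm (flipOp (mulOp m hm (flipOp f))) = flipOp (mulOp m hm (flipOp (mulOp m hm f))) := by
  apply Lp.ext
  filter_upwards [flip_mul_flip_ae hm f, flip_mul_flip_ae hm (mulOp m hm f), mulOp_ae hm f,
    mulOp_ae hm (flipOp (mulOp m hm (flipOp f)))] with x h1 h2 h3 h4
  rw [h4, h1, h2, h3]
  ring

theorem mulOp_mulOp_inv {m m' : Circ → ℂ} (hm : MemLp m ⊤ haar) (hm' : MemLp m' ⊤ haar)
    (h : ∀ x, m x * m' x = 1) (f : L2T) : mulOp m hm (mulOp m' hm' f) = f := by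
  apply Lp.ext
  filter_upwards [mulOp_ae hm (mulOp m' hm' f), mulOp_ae hm' f] with x h1 h2
  rw [h1, h2, ← mul_assoc, h, one_mul]

theorem inner_eq_integral (f g : L2T) :
    ⟪f, g⟫_ℂ = ∫ x, (starRingEnd ℂ) (f x) * g x ∂haar := by
  rw [L2.inner_def]
  simp only [RCLike.inner_apply, mul_comm]

theorem inner_symOp (f g : L2T) : ⟪f, symOp g⟫_ℂ = ⟪symOp f, g⟫_ℂ := by
  rw [inner_eq_integral, inner_eq_integral,
    ← integral_haar_neg (fun x => (starRingEnd ℂ) (symOp f x) * g x)]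
  apply integral_congr_ae
  filter_upwards [symOp_ae g, ae_comp_neg (symOp_ae f), ae_im_zeta_ne_zero] with x h1 h2 h3
  rw [h1, h2, neg_neg, sgnC_neg h3, zeta_neg, inv_inv, map_mul, map_mul, conj_zeta, map_neg,
    conj_sgnC]
  ring

/-- The embedding of `ℓ²(ℕ)` in `L²` of the circle as the Hardy space. -/
def hardyEmb : l2 →L[ℂ] L2T :=
  ((orthonormal_fourier (T := 2 * Real.pi)).comp (Nat.cast : ℕ → ℤ)
    Nat.cast_injective).orthogonalFamily.linearIsometry.toContinuousLinearMap

/-- The adjoint of `hardyEmb`. -/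
def hardyProj : L2T →L[ℂ] l2 := ContinuousLinearMap.adjoint hardyEmb

theorem hardyEmb_ee (k : ℕ) : hardyEmb (ee k) = fourierLp 2 (k : ℤ) := by
  have := ((orthonormal_fourier (T := 2 * Real.pi)).comp (Nat.cast : ℕ → ℤ)
    Nat.cast_injective).orthogonalFamily.linearIsometry_apply_single (i := k) (1 : ℂ)
  refine this.trans ?_
  simp

theorem hardyProj_hardyEmb (x : l2) : hardyProj (hardyEmb x) = x := by
  refine ext_inner_left ℂ fun y => ?_
  rw [hardyProj, ContinuousLinearMap.adjoint_inner_right]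
  exact LinearIsometry.inner_map_map _ y x

theorem inner_ee (j : ℕ) (x : l2) : ⟪ee j, x⟫_ℂ = x j := by
  rw [ee, lp.inner_single_left]; simp

theorem l2_ext {x y : l2} (h : ∀ j, ⟪ee j, x⟫_ℂ = ⟪ee j, y⟫_ℂ) : x = y := by
  ext j
  rw [← inner_ee, ← inner_ee, h]

theorem hasSum_ee (x : l2) : HasSum (fun i => x i • ee i) x := by
  convert lp.hasSum_single (p := 2) (by simp) x using 2 with i
  rw [ee, ← lp.single_smul, smul_eq_mul, mul_one]

theorem clm_ext_ee {E : Type*} [NormedAddCommGroup E] [NormedSpace ℂ E] {X Y : l2 →L[ℂ] E}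
    (h : ∀ k, X (ee k) = Y (ee k)) : X = Y := by
  ext x
  have hX := X.hasSum (hasSum_ee x)
  have hY := Y.hasSum (hasSum_ee x)
  simp only [map_smul, h] at hX hY
  exact hX.unique hY

theorem clm_ext_ent {X Y : l2 →L[ℂ] l2} (h : ∀ j k, ent X j k = ent Y j k) : X = Y :=
  clm_ext_ee fun k => l2_ext fun j => h j k

theorem fourierLp_ae (n : ℤ) :
    (fourierLp 2 n : L2T) =ᵐ[haar] fun x => zeta x ^ n := by
  filter_upwards [coeFn_fourierLp (T := 2 * Real.pi) 2 n] with x hx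
  rw [hx, fourier_eq_zpow]

theorem hardyEmb_ee_ae (k : ℕ) : hardyEmb (ee k) =ᵐ[haar] fun x => zeta x ^ k := by
  rw [hardyEmb_ee]
  simpa using fourierLp_ae k

theorem inner_ee_hardyProj (j : ℕ) (f : L2T) :
    ⟪ee j, hardyProj f⟫_ℂ = ∫ x, (zeta x ^ j)⁻¹ * f x ∂haar := by
  rw [hardyProj, ContinuousLinearMap.adjoint_inner_right, inner_eq_integral]
  apply integral_congr_ae
  filter_upwards [hardyEmb_ee_ae j] with x hx
  rw [hx, map_pow, conj_zeta, inv_pow]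

theorem flipOp_fourierLp (n : ℤ) :
    flipOp (fourierLp 2 n) = fourierLp 2 (-1 - n) := by
  apply Lp.ext
  filter_upwards [flipOp_ae (fourierLp 2 n), ae_comp_neg (fourierLp_ae n),
    fourierLp_ae (-1 - n)] with x h1 h2 h3
  rw [h1, h2, h3, zeta_neg, zpow_sub₀ (zeta_ne_zero x), inv_zpow', zpow_neg_one, zpow_neg]
  rfl

theorem hardyProj_fourierLp_neg (m : ℕ) : hardyProj (fourierLp 2 (-1 - (m : ℤ))) = 0 := by
  refine l2_ext fun j => ?_
  rw [hardyProj, ContinuousLinearMap.adjoint_inner_right, hardyEmb_ee, inner_zero_right]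
  exact orthonormal_fourier.2 (by omega)

theorem hardy_split (f : L2T) :
    hardyEmb (hardyProj f) + flipOp (hardyEmb (hardyProj (flipOp f))) = f := by
  have key : hardyEmb ∘L hardyProj + flipOp ∘L hardyEmb ∘L hardyProj ∘L flipOp
      = ContinuousLinearMap.id ℂ L2T := by
    have hd := (fourierBasis (T := 2 * Real.pi)).dense_span
    rw [coe_fourierBasis] at hd
    refine ContinuousLinearMap.ext_on
      (Submodule.dense_iff_topologicalClosure_eq_top.mpr hd) ?_
    rintro _ ⟨n, rfl⟩
    simp only [add_apply, ContinuousLinearMap.comp_apply,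
      ContinuousLinearMap.id_apply]
    rcases le_or_gt 0 n with hn | hn
    · lift n to ℕ using hn
      rw [flipOp_fourierLp, hardyProj_fourierLp_neg, ← hardyEmb_ee, hardyProj_hardyEmb]
      simp
    · obtain ⟨m, rfl⟩ : ∃ m : ℕ, n = -1 - m := ⟨(-1 - n).toNat, by omega⟩
      rw [hardyProj_fourierLp_neg, flipOp_fourierLp, sub_sub_cancel, ← hardyEmb_ee,
        hardyProj_hardyEmb, hardyEmb_ee, flipOp_fourierLp]
      simp
  exact DFunLike.congr_fun key f

end Operators

section Entries

theorem zeta_im_coe (θ : ℝ) : (zeta (θ : Circ)).im = Real.sin θ := by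
  rw [zeta_coe, mul_comm, Complex.exp_ofReal_mul_I_im]

theorem sgnC_coe (θ : ℝ) : sgnC (θ : Circ) = chi θ := by
  rw [sgnC, chi, zeta_im_coe]

theorem integral_mul_zeta_pow_inv {f : ℝ → ℂ} {m : Circ → ℂ} (h : ∀ θ : ℝ, m θ = f θ) (n : ℕ) :
    ∫ x, m x * (zeta x ^ n)⁻¹ ∂haar = fc f n := by
  rw [integral_haar, fc]
  simp only [h, zeta_coe, ← Complex.exp_nat_mul, ← Complex.exp_neg]
  congr! 5
  push_cast
  ring

theorem fc_chi (n : ℕ) :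
    fc chi ((n : ℤ) + 1) = ((1 / Real.pi : ℝ) : ℂ) * ∫ s in (-1:ℝ)..1, ((s ^ n : ℝ) : ℂ) := by
  have hπ : (Real.pi : ℂ) ≠ 0 := by exact_mod_cast Real.pi_ne_zero
  have hn : (n : ℂ) + 1 ≠ 0 := by exact_mod_cast Nat.succ_ne_zero n
  set a : ℂ := -(Complex.I * (n + 1)) with ha
  have ha0 : a ≠ 0 := neg_ne_zero.mpr (mul_ne_zero Complex.I_ne_zero hn)
  have he : ∀ θ : ℝ, Complex.exp (-(Complex.I * ((n : ℤ) + 1 : ℤ) * θ)) = Complex.exp (a * θ) := by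
    intro θ; congr 1; rw [ha]; push_cast; ring
  have e0 : Complex.exp (a * (0 : ℝ)) = 1 := by simp
  have e1 : Complex.exp (a * Real.pi) = (-1) ^ (n + 1) := by
    rw [← Complex.exp_neg_pi_mul_I, ← Complex.exp_nat_mul]
    congr 1; rw [ha]; push_cast; ring
  have e2 : Complex.exp (a * (2 * Real.pi : ℝ)) = 1 := by
    rw [Complex.exp_eq_one_iff]
    exact ⟨-(n + 1), by rw [ha]; push_cast; ring⟩
  have h1 : Set.EqOn (fun θ : ℝ => chi θ * Complex.exp (a * θ))
      (fun θ : ℝ => Complex.I * Complex.exp (a * θ)) (Set.Ioo 0 Real.pi) := by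
    intro θ hθ
    simp [chi, Real.sin_pos_of_pos_of_lt_pi hθ.1 hθ.2]
  have h2 : Set.EqOn (fun θ : ℝ => chi θ * Complex.exp (a * θ))
      (fun θ : ℝ => -Complex.I * Complex.exp (a * θ)) (Set.Ioo Real.pi (2 * Real.pi)) := by
    intro θ hθ
    have : Real.sin θ < 0 := by
      rw [← Real.sin_sub_two_pi]
      exact Real.sin_neg_of_neg_of_neg_pi_lt (by linarith [hθ.2]) (by linarith [hθ.1])
    simp [chi, not_lt.mpr this.le]
  have hle : (0 : ℝ) ≤ Real.pi := Real.pi_pos.le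
  have hle2 : Real.pi ≤ 2 * Real.pi := by linarith
  have i1 : IntervalIntegrable (fun θ : ℝ => chi θ * Complex.exp (a * θ)) volume 0 Real.pi :=
    (intervalIntegrable_congr_uIoo (by rwa [Set.uIoo_of_le hle])).mpr
      (Continuous.intervalIntegrable (by fun_prop) _ _)
  have i2 : IntervalIntegrable (fun θ : ℝ => chi θ * Complex.exp (a * θ)) volume
      Real.pi (2 * Real.pi) :=
    (intervalIntegrable_congr_uIoo (by rwa [Set.uIoo_of_le hle2])).mpr
      (Continuous.intervalIntegrable (by fun_prop) _ _)
  rw [fc]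
  simp only [he]
  rw [← intervalIntegral.integral_add_adjacent_intervals i1 i2,
    intervalIntegral.integral_congr_Ioo_of_le hle h1,
    intervalIntegral.integral_congr_Ioo_of_le hle2 h2,
    intervalIntegral.integral_const_mul, intervalIntegral.integral_const_mul,
    integral_exp_mul_complex ha0, integral_exp_mul_complex ha0, e0, e1, e2,
    intervalIntegral.integral_ofReal, integral_pow, ha]
  push_cast
  have hI := Complex.I_ne_zero
  field_simp
  ring

theorem ent_symOp (j k : ℕ) :
    ⟪ee j, hardyProj (symOp (hardyEmb (ee k)))⟫_ℂ
      = ((1 / Real.pi : ℝ) : ℂ) * ∫ s in (-1:ℝ)..1, ((s ^ (j + k) : ℝ) : ℂ) := by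
  rw [← fc_chi, inner_ee_hardyProj]
  have := integral_mul_zeta_pow_inv sgnC_coe (j + k + 1)
  rw [Nat.cast_add_one] at this
  rw [← this]
  apply integral_congr_ae
  filter_upwards [symOp_ae (hardyEmb (ee k)), ae_comp_neg (hardyEmb_ee_ae k)] with x h1 h2
  rw [h1, h2, zeta_neg, inv_pow]
  have := zeta_ne_zero x
  field_simp
  ring

theorem re_inner_finsupp_nonneg (x : ℕ → ℂ) (s : Finset ℕ) :
    0 ≤ (⟪∑ i ∈ s, x i • ee i,
      hardyProj (symOp (hardyEmb (∑ i ∈ s, x i • ee i)))⟫_ℂ).re := by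
  have key : ⟪∑ i ∈ s, x i • ee i, hardyProj (symOp (hardyEmb (∑ i ∈ s, x i • ee i)))⟫_ℂ
      = ((1 / Real.pi * ∫ t in (-1:ℝ)..1, ‖∑ i ∈ s, x i * (t : ℂ) ^ i‖ ^ 2 : ℝ) : ℂ) := by
    simp only [map_sum, map_smul, sum_inner, inner_sum, inner_smul_left, inner_smul_right,
      ent_symOp]
    rw [Complex.ofReal_mul, ← intervalIntegral.integral_ofReal]
    have h : ∀ t : ℝ, ((‖∑ i ∈ s, x i * (t : ℂ) ^ i‖ ^ 2 : ℝ) : ℂ)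
        = ∑ i ∈ s, ∑ j ∈ s, (starRingEnd ℂ) (x i) * x j * ((t ^ (i + j) : ℝ) : ℂ) := by
      intro t
      rw [Complex.ofReal_pow, ← Complex.conj_mul', map_sum, Finset.sum_mul_sum]
      refine Finset.sum_congr rfl fun i _ => Finset.sum_congr rfl fun j _ => ?_
      simp only [map_mul, map_pow, Complex.conj_ofReal, Complex.ofReal_pow]
      ring
    simp only [h]
    rw [Finset.sum_congr rfl fun _ _ => Finset.mul_sum _ _ _, Finset.sum_comm,
      intervalIntegral.integral_finsetSum fun i _ =>
        Continuous.intervalIntegrable (by fun_prop) _ _, Finset.mul_sum]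
    refine Finset.sum_congr rfl fun i _ => ?_
    rw [intervalIntegral.integral_finsetSum fun j _ =>
      Continuous.intervalIntegrable (by fun_prop) _ _, Finset.mul_sum]
    refine Finset.sum_congr rfl fun j _ => ?_
    rw [intervalIntegral.integral_const_mul]
    ring
  rw [key, Complex.ofReal_re]
  refine mul_nonneg (by positivity) (intervalIntegral.integral_nonneg (by norm_num) fun t _ => ?_)
  positivity

theorem re_inner_hankel_nonneg (x : l2) :
    0 ≤ (⟪x, hardyProj (symOp (hardyEmb x))⟫_ℂ).re := by
  have h := hasSum_ee x
  have hcont : Continuous fun y : l2 => (⟪y, hardyProj (symOp (hardyEmb y))⟫_ℂ).re :=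
    Complex.continuous_re.comp (continuous_id.inner (by fun_prop))
  exact ge_of_tendsto' ((hcont.tendsto x).comp h) fun s => re_inner_finsupp_nonneg (fun i => x i) s

/-- The operator `1 + H(χ)`. -/
def oneAddHankel : l2 →L[ℂ] l2 := 1 + hardyProj ∘L symOp ∘L hardyEmb

theorem isUnit_oneAddHankel : IsUnit oneAddHankel := by
  refine ContinuousLinearMap.isUnit_of_forall_le_norm_inner_map _ (c := 1) one_pos fun x => ?_
  rw [norm_inner_symm]
  refine le_trans ?_ (Complex.re_le_norm _)
  have h : oneAddHankel x = x + hardyProj (symOp (hardyEmb x)) := rfl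
  rw [h, inner_add_right, Complex.add_re, NNReal.coe_one, mul_one]
  have h1 : (⟪x, x⟫_ℂ).re = ‖x‖ ^ 2 := inner_self_eq_norm_sq (𝕜 := ℂ) x
  have := re_inner_hankel_nonneg x
  linarith

end Entries

section Symbols

variable {Φ : ℂ → ℂ}

theorem continuous_comp_zeta (hΦ : DiffContOnCl ℂ Φ (Metric.ball 0 1)) :
    Continuous fun x => Φ (zeta x) := by
  refine hΦ.continuousOn_ball.comp_continuous continuous_zeta fun x => ?_
  simp [norm_zeta]

/-- Multiplication by the boundary values of an analytic function. -/
def anaOp (hΦ : DiffContOnCl ℂ Φ (Metric.ball 0 1)) : L2T →L[ℂ] L2T :=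
  mulOp _ (memLp_top_of_continuous (continuous_comp_zeta hΦ))

theorem integral_zeta_pow_mul (hΦ : DiffContOnCl ℂ Φ (Metric.ball 0 1)) (n : ℕ) :
    ∫ x, zeta x ^ n * Φ (zeta x) ∂haar = 0 ^ n * Φ 0 := by
  have h : DiffContOnCl ℂ (fun z : ℂ => z ^ n) (Metric.ball 0 1) :=
    (differentiable_pow n).diffContOnCl
  exact integral_analytic (Φ := fun z => z ^ n * Φ z) (h.smul hΦ)

theorem hardyProj_flip_ana (hΦ : DiffContOnCl ℂ Φ (Metric.ball 0 1)) (x : l2) :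
    hardyProj (flipOp (anaOp hΦ (hardyEmb x))) = 0 := by
  have h : hardyProj ∘L flipOp ∘L anaOp hΦ ∘L hardyEmb = 0 := by
    refine clm_ext_ent fun j k => ?_
    change ⟪ee j, hardyProj (flipOp (anaOp hΦ (hardyEmb (ee k))))⟫_ℂ = ⟪ee j, 0⟫_ℂ
    have h0 := integral_zeta_pow_mul hΦ (j + k + 1)
    rw [zero_pow (Nat.succ_ne_zero _), zero_mul] at h0
    rw [inner_zero_right, inner_ee_hardyProj, ← h0, ← integral_haar_neg]
    apply integral_congr_ae
    have hae := mulOp_ae (memLp_top_of_continuous (continuous_comp_zeta hΦ)) (hardyEmb (ee k))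
    filter_upwards [flipOp_ae (anaOp hΦ (hardyEmb (ee k))), ae_comp_neg (flipOp_ae
      (anaOp hΦ (hardyEmb (ee k)))), hae, hardyEmb_ee_ae k] with x h1 h2 h3 h4
    rw [h2, neg_neg, anaOp, h3, h4, zeta_neg, inv_pow, inv_inv, inv_inv]
    ring
  exact DFunLike.congr_fun h x

theorem ent_toeplitz_ana (hΦ : DiffContOnCl ℂ Φ (Metric.ball 0 1)) {j k : ℕ} (hjk : j ≤ k) :
    ⟪ee j, hardyProj (anaOp hΦ (hardyEmb (ee k)))⟫_ℂ = 0 ^ (k - j) * Φ 0 := by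
  rw [inner_ee_hardyProj, ← integral_zeta_pow_mul hΦ]
  apply integral_congr_ae
  filter_upwards [mulOp_ae (memLp_top_of_continuous (continuous_comp_zeta hΦ)) (hardyEmb (ee k)),
    hardyEmb_ee_ae k] with x h1 h2
  rw [anaOp, h1, h2, pow_sub₀ _ (zeta_ne_zero x) hjk]
  ring

theorem ent_toeplitz_flip_ana (hΦ : DiffContOnCl ℂ Φ (Metric.ball 0 1)) {j k : ℕ} (hjk : k ≤ j) :
    ⟪ee j, hardyProj (flipOp (anaOp hΦ (flipOp (hardyEmb (ee k)))))⟫_ℂ = 0 ^ (j - k) * Φ 0 := by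
  rw [inner_ee_hardyProj, ← integral_zeta_pow_mul hΦ, ← integral_haar_neg]
  apply integral_congr_ae
  filter_upwards [ae_comp_neg (flip_mul_flip_ae
      (memLp_top_of_continuous (continuous_comp_zeta hΦ)) (hardyEmb (ee k))),
    ae_comp_neg (hardyEmb_ee_ae k)] with x h1 h2
  rw [anaOp, h1, h2, pow_sub₀ _ (zeta_ne_zero x) hjk, zeta_neg, neg_neg, inv_pow, inv_inv, inv_pow]
  ring

theorem flipData_ana {Φi : ℂ → ℂ} (hΦ : DiffContOnCl ℂ Φ (Metric.ball 0 1))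
    (hΦi : DiffContOnCl ℂ Φi (Metric.ball 0 1)) (h : ∀ z, ‖z‖ = 1 → Φ z * Φi z = 1)
    {B' : l2 →L[ℂ] l2} (hB : oneAddHankel * B' = 1) (hB' : B' * oneAddHankel = 1) :
    FlipData (hardyEmb : l2 →ₗ[ℂ] L2T) (hardyProj : L2T →ₗ[ℂ] l2) (flipOp : L2T →ₗ[ℂ] L2T)
      (symOp : L2T →ₗ[ℂ] L2T) (anaOp hΦ : L2T →ₗ[ℂ] L2T) (anaOp hΦi : L2T →ₗ[ℂ] L2T)
      (oneAddHankel : l2 →ₗ[ℂ] l2) (B' : l2 →ₗ[ℂ] l2) where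
  KJ := hardyProj_hardyEmb
  split := hardy_split
  RR := flipOp_flipOp
  SS := symOp_symOp
  SR := symOp_flipOp
  B_apply _ := rfl
  BB' x := DFunLike.congr_fun hB x
  B'B x := DFunLike.congr_fun hB' x
  a_ai := mulOp_mulOp_inv _ _ fun x => h _ (norm_zeta x)
  ai_a := mulOp_mulOp_inv _ _ fun x => by rw [mul_comm]; exact h _ (norm_zeta x)
  S_a := symOp_mulOp _
  comm := mulOp_flip_comm _
  KRaJ := hardyProj_flip_ana hΦ
  KRaiJ := hardyProj_flip_ana hΦi

end Symbols

section SquareRoot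

/-- The square root of `1 - z²` on the unit disk. -/
def sqrtF (z : ℂ) : ℂ := (1 - z ^ 2) ^ (2⁻¹ : ℂ)

theorem sqrtF_sq (z : ℂ) : sqrtF z ^ 2 = 1 - z ^ 2 :=
  Complex.cpow_nat_inv_pow _ two_ne_zero

theorem sqrtF_zero : sqrtF 0 = 1 := by simp [sqrtF]

theorem re_one_sub_sq_nonneg {z : ℂ} (hz : ‖z‖ ≤ 1) : 0 ≤ (1 - z ^ 2).re := by
  have h := Complex.re_le_norm (z ^ 2)
  rw [norm_pow] at h
  have : ‖z‖ ^ 2 ≤ 1 := pow_le_one₀ (norm_nonneg z) hz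
  rw [Complex.sub_re, Complex.one_re]
  linarith

theorem sqrtF_conj {z : ℂ} (hz : ‖z‖ ≤ 1) :
    sqrtF ((starRingEnd ℂ) z) = (starRingEnd ℂ) (sqrtF z) := by
  have harg : (1 - z ^ 2).arg ≠ Real.pi := fun h =>
    not_lt.mpr (re_one_sub_sq_nonneg hz) (Complex.arg_eq_pi_iff.mp h).1
  have h2 : (starRingEnd ℂ) (2⁻¹ : ℂ) = 2⁻¹ := by
    rw [map_inv₀, map_ofNat]
  have h := Complex.conj_cpow (1 - z ^ 2) 2⁻¹ harg
  rw [h2] at h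
  rw [sqrtF, sqrtF, ← h, map_sub, map_one, map_pow]

theorem diffContOnCl_sqrtF : DiffContOnCl ℂ sqrtF (Metric.ball 0 1) := by
  refine ⟨?_, ?_⟩
  · refine DifferentiableOn.cpow_const (by fun_prop) fun z hz => Or.inl ?_
    rw [mem_ball_zero_iff] at hz
    have h := Complex.re_le_norm (z ^ 2)
    rw [norm_pow] at h
    have : ‖z‖ ^ 2 < 1 := pow_lt_one₀ (norm_nonneg z) hz two_ne_zero
    rw [Complex.sub_re, Complex.one_re]
    linarith
  · rw [closure_ball _ one_ne_zero]
    intro z hz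
    rw [mem_closedBall_zero_iff] at hz
    refine ContinuousAt.continuousWithinAt ?_
    by_cases h0 : 1 - z ^ 2 = 0
    · refine ContinuousAt.comp (f := fun z : ℂ => 1 - z ^ 2)
        (g := fun w : ℂ => w ^ (2⁻¹ : ℂ)) ?_ (by fun_prop)
      simp only [h0]
      exact Complex.continuousAt_cpow_const_of_re_pos (Or.inl le_rfl) (by norm_num)
    · exact ContinuousAt.comp (f := fun z : ℂ => 1 - z ^ 2) (g := fun w : ℂ => w ^ (2⁻¹ : ℂ))
        (Complex.continuousAt_cpow_const_of_re_pos (Or.inl (re_one_sub_sq_nonneg hz))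
          (by norm_num)) (by fun_prop)

theorem sqrtF_inv {z : ℂ} (hz : ‖z‖ = 1) : sqrtF z⁻¹ = (starRingEnd ℂ) (sqrtF z) := by
  rw [← sqrtF_conj hz.le, Complex.inv_def, Complex.normSq_eq_norm_sq, hz]; simp

theorem norm_sqrtF_sq {z : ℂ} (hz : ‖z‖ = 1) : ‖sqrtF z‖ ^ 2 = 2 * |z.im| := by
  rw [← norm_pow, sqrtF_sq]
  have h0 : z ≠ 0 := by rw [← norm_pos_iff, hz]; exact one_pos
  have h1 : (1 : ℂ) - z ^ 2 = -(2 * Complex.I * z.im) * z := by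
    have h2 : z⁻¹ = (starRingEnd ℂ) z := by
      rw [Complex.inv_def, Complex.normSq_eq_norm_sq, hz]; simp
    have h3 := Complex.sub_conj z
    rw [← h2] at h3
    have : (2 * Complex.I * z.im : ℂ) = z - z⁻¹ := by rw [h3]; push_cast; ring
    rw [this]
    field_simp
    ring
  rw [h1]
  simp [hz]

theorem inv_eq_sub_of_norm_one {z : ℂ} (hz : ‖z‖ = 1) : z⁻¹ = z - 2 * Complex.I * z.im := by
  have h := Complex.sub_conj z
  rw [Complex.inv_def, Complex.normSq_eq_norm_sq, hz]
  push_cast at h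
  simp only [one_pow, inv_one, Complex.ofReal_one, mul_one]
  linear_combination -h

theorem sqrtF_zeta_inv {x : Circ} (hx : (zeta x).im ≠ 0) :
    sqrtF (zeta x)⁻¹ = sgnC x * ((zeta x)⁻¹ * sqrtF (zeta x)) := by
  have hz := norm_zeta x
  have h0 := zeta_ne_zero x
  have hn := norm_sqrtF_sq hz
  have hq : sqrtF (zeta x) ≠ 0 := by
    intro h
    rw [h] at hn
    simp [hx] at hn
  refine mul_right_cancel₀ hq ?_
  have h1 : sqrtF (zeta x)⁻¹ * sqrtF (zeta x) = ((2 * |(zeta x).im| : ℝ) : ℂ) := by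
    rw [sqrtF_inv hz, Complex.conj_mul', ← hn, Complex.ofReal_pow]
  have h2 : sgnC x * ((zeta x)⁻¹ * sqrtF (zeta x)) * sqrtF (zeta x)
      = sgnC x * ((zeta x)⁻¹ - zeta x) := by
    have h3 := sqrtF_sq (zeta x)
    have h4 : (zeta x)⁻¹ * zeta x = 1 := inv_mul_cancel₀ h0
    linear_combination sgnC x * (zeta x)⁻¹ * h3 - sgnC x * zeta x * h4
  rw [h1, h2, inv_eq_sub_of_norm_one hz, sgnC]
  split_ifs with h
  · rw [abs_of_pos h]
    push_cast
    linear_combination 2 * ((zeta x).im : ℂ) * Complex.I_sq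
  · rw [abs_of_nonpos (not_lt.mp h)]
    push_cast
    linear_combination -2 * ((zeta x).im : ℂ) * Complex.I_sq

end SquareRoot

section SymmetricVectors

theorem continuous_gvec (k : ℕ) :
    Continuous fun x => (zeta x + (zeta x)⁻¹) ^ k * sqrtF (zeta (-x)) :=
  ((continuous_zeta.add (continuous_zeta.inv₀ zeta_ne_zero)).pow k).mul
    ((continuous_comp_zeta diffContOnCl_sqrtF).comp continuous_neg)

/-- The vectors `(t + t⁻¹)ᵏ (1 - t⁻²)^{1/2}`. -/
def gvec (k : ℕ) : L2T := mulOp _ (memLp_top_of_continuous (continuous_gvec k)) (fourierLp 2 0)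

theorem gvec_ae (k : ℕ) :
    gvec k =ᵐ[haar] fun x => (zeta x + (zeta x)⁻¹) ^ k * sqrtF (zeta x)⁻¹ := by
  filter_upwards [mulOp_ae (memLp_top_of_continuous (continuous_gvec k)) (fourierLp 2 0),
    fourierLp_ae 0] with x h1 h2
  rw [gvec, h1, h2, zpow_zero, mul_one, zeta_neg]

theorem symOp_gvec (k : ℕ) : symOp (gvec k) = gvec k := by
  apply Lp.ext
  filter_upwards [symOp_ae (gvec k), gvec_ae k, ae_comp_neg (gvec_ae k), ae_im_zeta_ne_zero]
    with x h1 h2 h3 h4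
  rw [h1, h2, h3, zeta_neg, inv_inv, sqrtF_zeta_inv h4]
  ring

theorem inner_ee_hardyProj_gvec {j k : ℕ} (hjk : k ≤ j) :
    ⟪ee j, hardyProj (gvec k)⟫_ℂ = 0 ^ (j - k) := by
  have hΦ : DiffContOnCl ℂ (fun z : ℂ => (1 + z ^ 2) ^ k * sqrtF z) (Metric.ball 0 1) :=
    DiffContOnCl.smul (f := sqrtF) (c := fun z : ℂ => (1 + z ^ 2) ^ k)
      (Differentiable.diffContOnCl (by fun_prop)) diffContOnCl_sqrtF
  have h := integral_zeta_pow_mul hΦ (j - k)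
  simp only [sqrtF_zero, zero_pow two_ne_zero, add_zero, one_pow, mul_one] at h
  rw [inner_ee_hardyProj, ← h, ← integral_haar_neg]
  apply integral_congr_ae
  filter_upwards [ae_comp_neg (gvec_ae k)] with x h1
  have h0 := zeta_ne_zero x
  rw [h1, zeta_neg, inv_inv, inv_pow, inv_inv, ← Nat.sub_add_cancel hjk, Nat.add_sub_cancel,
    pow_add, mul_assoc, ← mul_assoc (zeta x ^ k), ← mul_pow]
  congr 3
  field_simp

theorem integral_eq_bmom {m : Circ → ℂ} (hm : Continuous m) {b : ℝ → ℂ}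
    (hb : ∀ θ : ℝ, b (Real.cos θ) = m θ) (e : ℕ) :
    ∫ x, m x * (zeta x + (zeta x)⁻¹) ^ e * (|(zeta x).im| : ℝ) ∂haar = bmom b e := by
  have hcos : ∀ θ : ℝ, zeta (θ : Circ) + (zeta (θ : Circ))⁻¹ = 2 * (Real.cos θ : ℝ) := by
    intro θ
    rw [zeta_coe, ← Complex.exp_neg, Complex.ofReal_cos, Complex.two_cos, mul_comm, neg_mul]
  set f : ℝ → ℂ := fun θ => b (Real.cos θ) * (2 * (Real.cos θ : ℝ)) ^ e * (|Real.sin θ| : ℝ)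
    with hf
  have hfc : Continuous f := by
    have : Continuous fun θ : ℝ => b (Real.cos θ) := by
      simp only [hb]
      exact hm.comp (AddCircle.continuous_mk' _)
    exact (this.mul (by fun_prop)).mul (Complex.continuous_ofReal.comp Real.continuous_sin.abs)
  have h1 : ∫ θ in Real.pi..(2 * Real.pi), f θ = ∫ θ in (0:ℝ)..Real.pi, f θ := by
    have := intervalIntegral.integral_comp_sub_left f (2 * Real.pi) (a := 0) (b := Real.pi)
    rw [sub_zero, show 2 * Real.pi - Real.pi = Real.pi by ring] at this
    rw [← this]
    simp only [hf, Real.cos_two_pi_sub, Real.sin_two_pi_sub, abs_neg]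
  have h2 : ∫ θ in (0:ℝ)..Real.pi, f θ = ∫ x in (-1:ℝ)..1, b x * (2 * (x : ℂ)) ^ e := by
    have := intervalIntegral.integral_deriv_smul_comp_of_deriv_nonpos (a := 0) (b := Real.pi)
      (f := Real.cos) (f' := fun x => -Real.sin x) (g := fun x : ℝ => b x * (2 * (x : ℂ)) ^ e)
      Real.continuous_cos.continuousOn (fun x _ => Real.hasDerivAt_cos x) fun x hx => by
        rw [min_eq_left Real.pi_pos.le, max_eq_right Real.pi_pos.le] at hx
        exact neg_nonpos.mpr (Real.sin_pos_of_pos_of_lt_pi hx.1 hx.2).le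
    rw [Real.cos_zero, Real.cos_pi] at this
    rw [intervalIntegral.integral_symm 1 (-1), ← this, ← intervalIntegral.integral_neg]
    refine intervalIntegral.integral_congr fun x hx => ?_
    rw [Set.uIcc_of_le Real.pi_pos.le] at hx
    simp only [hf, abs_of_nonneg (Real.sin_nonneg_of_mem_Icc hx), Function.comp_apply,
      neg_smul, neg_neg, Complex.real_smul]
    ring
  rw [integral_haar]
  simp only [hcos, zeta_im_coe, ← hb]
  rw [← intervalIntegral.integral_add_adjacent_intervals (hfc.intervalIntegrable 0 Real.pi)
    (hfc.intervalIntegrable _ _), h1, h2, bmom]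
  push_cast
  field_simp
  ring

theorem inner_gvec_gvec {m : Circ → ℂ} (hm : Continuous m) {b : ℝ → ℂ} {G : ℂ}
    (hb : ∀ θ : ℝ, b (Real.cos θ) = G * m θ) {w : L2T} {k : ℕ}
    (hw : w =ᵐ[haar] fun x => m x * gvec k x) (j : ℕ) :
    G * ⟪gvec j, w⟫_ℂ = 2 * bmom b (j + k) := by
  rw [← integral_eq_bmom (m := fun x => G * m x) (continuous_const.mul hm) hb, inner_eq_integral,
    ← integral_const_mul, ← integral_const_mul]
  apply integral_congr_ae
  filter_upwards [hw, gvec_ae j, gvec_ae k] with x h1 h2 h3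
  have h4 := norm_sqrtF_sq (norm_zeta x)
  have h5 : (starRingEnd ℂ) (sqrtF (zeta x)⁻¹) * sqrtF (zeta x)⁻¹ = 2 * (|(zeta x).im| : ℝ) := by
    rw [sqrtF_inv (norm_zeta x), Complex.conj_conj, Complex.mul_conj', ← Complex.ofReal_pow, h4]
    push_cast
    ring
  rw [h1, h2, h3, map_mul, map_pow, map_add, map_inv₀, conj_zeta, inv_inv,
    add_comm (zeta x)⁻¹, pow_add]
  linear_combination G * m x * (zeta x + (zeta x)⁻¹) ^ j * (zeta x + (zeta x)⁻¹) ^ k * h5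

end SymmetricVectors

section Sections

theorem hasSum_ent_comp (X Y : l2 →L[ℂ] l2) (j k : ℕ) :
    HasSum (fun i => ent X j i * ent Y i k) (ent (X ∘L Y) j k) := by
  have h := ((innerSL ℂ (ee j)) ∘L X).hasSum (hasSum_ee (Y (ee k)))
  refine h.congr_fun ?_
  intro i
  simp [ent, inner_ee, mul_comm]

/-- The `n × n` section `Pₙ X Pₙ` as a matrix. -/
def secMat (n : ℕ) (X : l2 →L[ℂ] l2) : Matrix (Fin n) (Fin n) ℂ :=
  Matrix.of fun j k => ent X j k

theorem secMat_comp {n : ℕ} {X Y : l2 →L[ℂ] l2}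
    (h : ∀ j k i, j < n → k < n → n ≤ i → ent X j i * ent Y i k = 0) :
    secMat n (X ∘L Y) = secMat n X * secMat n Y := by
  ext j k
  have h1 := hasSum_sum_of_ne_finset_zero (L := .unconditional ℕ) (s := Finset.range n)
    (f := fun i => ent X j i * ent Y i k) fun i hi =>
      h j k i j.2 k.2 (by simpa using hi)
  have h2 := (hasSum_ent_comp X Y j k).unique h1
  rw [Matrix.mul_apply]
  simp only [secMat, Matrix.of_apply]
  rw [h2, Finset.sum_range]

theorem det_of_upper_unit {n : ℕ} {u : ℕ → ℕ → ℂ} (h : ∀ j k, k ≤ j → u j k = 0 ^ (j - k)) :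
    (Matrix.of fun j k : Fin n => u j k).det = 1 := by
  rw [Matrix.det_of_isUpperTriangular]
  · exact Finset.prod_eq_one fun i _ => by simp [h i i le_rfl]
  · intro j k hjk
    have hjk' : (k : ℕ) < j := hjk
    rw [Matrix.of_apply, h _ _ hjk'.le, zero_pow (Nat.sub_pos_of_lt hjk').ne']

theorem det_of_lower_unit {n : ℕ} {u : ℕ → ℕ → ℂ} (h : ∀ j k, j ≤ k → u j k = 0 ^ (k - j)) :
    (Matrix.of fun j k : Fin n => u j k).det = 1 := by
  rw [← Matrix.det_transpose]
  exact det_of_upper_unit (u := fun j k => u k j) fun j k hjk => h k j hjk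

theorem eq_sum_ee {x : l2} {n : ℕ} (hx : ∀ i, n ≤ i → ⟪ee i, x⟫_ℂ = 0) :
    x = ∑ i : Fin n, ⟪ee i, x⟫_ℂ • ee i := by
  have h := hasSum_sum_of_ne_finset_zero (L := .unconditional ℕ) (s := Finset.range n)
    (f := fun i => x i • ee i)
    fun i hi => by rw [← inner_ee, hx i (by simpa using hi), zero_smul]
  rw [← Finset.sum_range (fun i => ⟪ee i, x⟫_ℂ • ee i)]
  simp only [inner_ee]
  exact (hasSum_ee x).unique h

theorem gram_eq_mul {n : ℕ} (X : l2 →L[ℂ] l2) (u : ℕ → l2)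
    (hu : ∀ j k, k < n → n ≤ j → ⟪ee j, u k⟫_ℂ = 0) :
    (Matrix.of fun j k : Fin n => ⟪u j, X (u k)⟫_ℂ)
      = (Matrix.of fun j k : Fin n => ⟪ee j, u k⟫_ℂ).conjTranspose * secMat n X
        * Matrix.of fun j k : Fin n => ⟪ee j, u k⟫_ℂ := by
  ext j k
  rw [Matrix.of_apply]
  conv_lhs => rw [eq_sum_ee fun i hi => hu i j j.2 hi, eq_sum_ee fun i hi => hu i k k.2 hi]
  simp only [map_sum, map_smul, sum_inner, inner_sum, inner_smul_left, inner_smul_right,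
    Matrix.mul_apply, Matrix.conjTranspose_apply, Matrix.of_apply, secMat, ent, Finset.sum_mul,
    Finset.mul_sum, Complex.star_def]
  refine Finset.sum_congr rfl fun i _ => Finset.sum_congr rfl fun l _ => ?_
  ring

theorem det_gram {n : ℕ} (X : l2 →L[ℂ] l2) {u : ℕ → l2}
    (hu : ∀ j k, k ≤ j → ⟪ee j, u k⟫_ℂ = 0 ^ (j - k)) :
    (Matrix.of fun j k : Fin n => ⟪u j, X (u k)⟫_ℂ).det = (secMat n X).det := by
  rw [gram_eq_mul X u fun j k hk hj => by
      rw [hu j k (hk.le.trans hj), zero_pow (Nat.sub_pos_of_lt (hk.trans_le hj)).ne'],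
    Matrix.det_mul, Matrix.det_mul, Matrix.det_conjTranspose, det_of_upper_unit hu, star_one,
    one_mul, mul_one]

end Sections

section Factorization

theorem diffContOnCl_powerSeries {γ : ℕ → ℂ} (hγ : Summable fun k => ‖γ k‖) :
    DiffContOnCl ℂ (fun z => ∑' k, γ k * z ^ k) (Metric.ball 0 1) := by
  have hle : ∀ (k : ℕ) (z : ℂ), z ∈ Metric.closedBall (0 : ℂ) 1 → ‖γ k * z ^ k‖ ≤ ‖γ k‖ := by
    intro k z hz
    rw [norm_mul, norm_pow]
    exact mul_le_of_le_one_right (norm_nonneg _)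
      (pow_le_one₀ (norm_nonneg _) (mem_closedBall_zero_iff.mp hz))
  refine ⟨Complex.differentiableOn_tsum_of_summable_norm hγ (fun k => by fun_prop)
    Metric.isOpen_ball fun k z hz => hle k z (Metric.ball_subset_closedBall hz), ?_⟩
  rw [closure_ball _ one_ne_zero]
  exact continuousOn_tsum (fun k => by fun_prop) hγ hle

variable {Φ Φi : ℂ → ℂ} (hΦ : DiffContOnCl ℂ Φ (Metric.ball 0 1))
  (hΦi : DiffContOnCl ℂ Φi (Metric.ball 0 1)) (B' : l2 →L[ℂ] l2)

/-- The Toeplitz operator with symbol `Φ(t⁻¹)`. -/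
def coToeplitz : l2 →L[ℂ] l2 :=
  hardyProj ∘L flipOp ∘L anaOp hΦ ∘L flipOp ∘L hardyEmb

/-- The Toeplitz operator with symbol `Φ(t)`. -/
def toeplitz : l2 →L[ℂ] l2 := hardyProj ∘L anaOp hΦ ∘L hardyEmb

/-- The vector fixed by `symOp` whose image under `hardyProj` is a given one, when `B'` is the
inverse of `1 + H(χ)`. -/
def symExt : l2 →L[ℂ] L2T := (1 + symOp) ∘L hardyEmb ∘L B'

/-- Multiplication by `Φ(t) Φ(t⁻¹)` on the vectors fixed by `symOp`, carried over to `ℓ²(ℕ)`. -/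
def evenComp : l2 →L[ℂ] l2 :=
  B' ∘L hardyProj ∘L anaOp hΦ ∘L flipOp ∘L anaOp hΦ ∘L flipOp ∘L symExt B'

/-- The operator `1 + H(ψ)` for `ψ(t) = Φ(t⁻¹) Φi(t) χ(t)`. -/
def oneAddHankelSymbol : l2 →L[ℂ] l2 :=
  1 + hardyProj ∘L flipOp ∘L anaOp hΦ ∘L flipOp ∘L anaOp hΦi ∘L symOp ∘L hardyEmb

/-- The inverse of `oneAddHankelSymbol`. -/
def hankelInverse : l2 →L[ℂ] l2 :=
  toeplitz hΦi ∘L evenComp hΦ B' ∘L coToeplitz hΦi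

variable {hΦ hΦi B'}

theorem ent_oneAddHankelSymbol {f : ℝ → ℂ}
    (hf : ∀ θ : ℝ, f θ = Φ (Complex.exp (-(Complex.I * θ))) * Φi (Complex.exp (Complex.I * θ))
      * chi θ) (j k : ℕ) :
    ent (oneAddHankelSymbol hΦ hΦi) j k = (if j = k then 1 else 0) + fc f ((j : ℤ) + k + 1) := by
  have h1 : ⟪ee j, ee k⟫_ℂ = if j = k then 1 else 0 := by
    rw [inner_ee, ee, lp.single_apply]
    rcases eq_or_ne j k with rfl | h
    · simp
    · simp [h]
  have h2 := integral_mul_zeta_pow_inv (f := f)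
    (m := fun x => Φ (zeta x)⁻¹ * Φi (zeta x) * sgnC x)
    (fun θ => by rw [hf, zeta_coe, sgnC_coe, Complex.exp_neg]) (j + k + 1)
  push_cast at h2
  have h3 : ent (oneAddHankelSymbol hΦ hΦi) j k = ⟪ee j, ee k⟫_ℂ
      + ⟪ee j, hardyProj (flipOp (anaOp hΦ (flipOp (anaOp hΦi (symOp (hardyEmb (ee k)))))))⟫_ℂ :=
    inner_add_right _ _ _
  rw [h3, h1, ← h2, inner_ee_hardyProj]
  congr 1
  apply integral_congr_ae
  filter_upwards [flip_mul_flip_ae (memLp_top_of_continuous (continuous_comp_zeta hΦ))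
      (anaOp hΦi (symOp (hardyEmb (ee k)))),
    mulOp_ae (memLp_top_of_continuous (continuous_comp_zeta hΦi)) (symOp (hardyEmb (ee k))),
    symOp_ae (hardyEmb (ee k)), ae_comp_neg (hardyEmb_ee_ae k)] with x h4 h5 h6 h7
  rw [anaOp, h4, anaOp, h5, h6, h7, zeta_neg, inv_pow]
  have := zeta_ne_zero x
  field_simp
  ring

theorem oneAddHankelSymbol_comp_inverse (h : ∀ z, ‖z‖ = 1 → Φ z * Φi z = 1)
    (hB : oneAddHankel * B' = 1) (hB' : B' * oneAddHankel = 1) :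
    oneAddHankelSymbol hΦ hΦi ∘L hankelInverse hΦ hΦi B' = 1 := by
  ext1 z
  exact (flipData_ana hΦ hΦi h hB hB').right_inv z rfl rfl

theorem inverse_comp_oneAddHankelSymbol (h : ∀ z, ‖z‖ = 1 → Φ z * Φi z = 1)
    (hB : oneAddHankel * B' = 1) (hB' : B' * oneAddHankel = 1) :
    hankelInverse hΦ hΦi B' ∘L oneAddHankelSymbol hΦ hΦi = 1 := by
  ext1 x
  exact (flipData_ana hΦ hΦi h hB hB').left_inv x rfl rfl

theorem toeplitz_comp_inverse_comp_coToeplitz (h : ∀ z, ‖z‖ = 1 → Φ z * Φi z = 1)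
    (hB : oneAddHankel * B' = 1) (hB' : B' * oneAddHankel = 1) :
    toeplitz hΦ ∘L hankelInverse hΦ hΦi B' ∘L coToeplitz hΦ = evenComp hΦ B' := by
  ext1 x
  exact (flipData_ana hΦ hΦi h hB hB').conj_inv x rfl rfl

theorem det_secMat_hankelInverse (h : ∀ z, ‖z‖ = 1 → Φ z * Φi z = 1)
    (hB : oneAddHankel * B' = 1) (hB' : B' * oneAddHankel = 1) (h0 : Φ 0 = 1) (n : ℕ) :
    (secMat n (hankelInverse hΦ hΦi B')).det = (secMat n (evenComp hΦ B')).det := by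
  have hl : ∀ j k, j ≤ k → ent (toeplitz hΦ) j k = 0 ^ (k - j) := fun j k hjk => by
    have := ent_toeplitz_ana hΦ hjk
    rwa [h0, mul_one] at this
  have hu : ∀ j k, k ≤ j → ent (coToeplitz hΦ) j k = 0 ^ (j - k) := fun j k hjk => by
    have := ent_toeplitz_flip_ana hΦ hjk
    rwa [h0, mul_one] at this
  rw [← toeplitz_comp_inverse_comp_coToeplitz (hΦi := hΦi) h hB hB',
    secMat_comp fun j k i hj _ hi => by
      rw [hl j i (hj.le.trans hi), zero_pow (Nat.sub_pos_of_lt (hj.trans_le hi)).ne', zero_mul],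
    secMat_comp fun j k i _ hk hi => by
      rw [hu i k (hk.le.trans hi), zero_pow (Nat.sub_pos_of_lt (hk.trans_le hi)).ne', mul_zero],
    Matrix.det_mul, Matrix.det_mul, secMat, secMat, secMat, det_of_lower_unit hl,
    det_of_upper_unit hu, one_mul, mul_one]

theorem inner_evenComp_gvec (hΦi : DiffContOnCl ℂ Φi (Metric.ball 0 1))
    (h : ∀ z, ‖z‖ = 1 → Φ z * Φi z = 1)
    (hB : oneAddHankel * B' = 1) (hB' : B' * oneAddHankel = 1) {b : ℝ → ℂ} {G : ℂ}
    (hb : ∀ θ : ℝ, b (Real.cos θ)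
      = G * (Φ (Complex.exp (Complex.I * θ)) * Φ (Complex.exp (-(Complex.I * θ)))))
    (j k : ℕ) :
    G * ⟪hardyProj (gvec j), evenComp hΦ B' (hardyProj (gvec k))⟫_ℂ = bmom b (j + k) := by
  have hd := flipData_ana hΦ hΦi h hB hB'
  set w : L2T := anaOp hΦ (flipOp (anaOp hΦ (flipOp (gvec k)))) with hw
  have hSw : symOp w = w := hd.S_even (symOp_gvec k)
  have hg : symExt B' (hardyProj (gvec k)) = gvec k := hd.eq_of_fixed (symOp_gvec k)
  set y := B' (hardyProj w) with hy
  have hyw : hardyEmb y + symOp (hardyEmb y) = w := hd.eq_of_fixed hSw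
  have hD : evenComp hΦ B' (hardyProj (gvec k)) = y := by
    rw [hy, hw]
    conv_rhs => rw [← hg]
    rfl
  have h1 : ⟪gvec j, w⟫_ℂ = 2 * ⟪hardyProj (gvec j), y⟫_ℂ := by
    rw [← hyw, inner_add_right, inner_symOp, symOp_gvec, hardyProj,
      ContinuousLinearMap.adjoint_inner_left]
    ring
  have hae : w =ᵐ[haar] fun x => Φ (zeta x) * Φ (zeta (-x)) * gvec k x := by
    filter_upwards [mulOp_ae (memLp_top_of_continuous (continuous_comp_zeta hΦ))
        (flipOp (anaOp hΦ (flipOp (gvec k)))),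
      flip_mul_flip_ae (memLp_top_of_continuous (continuous_comp_zeta hΦ)) (gvec k)] with x h2 h3
    rw [mul_assoc, ← h3]
    exact h2
  have h2 := inner_gvec_gvec (b := b) (G := G) (m := fun x => Φ (zeta x) * Φ (zeta (-x)))
    ((continuous_comp_zeta hΦ).mul ((continuous_comp_zeta hΦ).comp continuous_neg))
    (fun θ => by rw [hb, zeta_neg, zeta_coe, ← Complex.exp_neg]) hae j
  rw [h1] at h2
  rw [hD]
  linear_combination h2 / 2

theorem det_bmom (h : ∀ z, ‖z‖ = 1 → Φ z * Φi z = 1)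
    (hB : oneAddHankel * B' = 1) (hB' : B' * oneAddHankel = 1) (h0 : Φ 0 = 1) {b : ℝ → ℂ} {G : ℂ}
    (hb : ∀ θ : ℝ, b (Real.cos θ)
      = G * (Φ (Complex.exp (Complex.I * θ)) * Φ (Complex.exp (-(Complex.I * θ)))))
    (n : ℕ) :
    (Matrix.of fun j k : Fin n => bmom b ((j : ℕ) + k)).det
      = G ^ n * (secMat n (hankelInverse hΦ hΦi B')).det := by
  have hM : (Matrix.of fun j k : Fin n => bmom b ((j : ℕ) + k)) = G • Matrix.of fun j k : Fin n =>
      ⟪hardyProj (gvec j), evenComp hΦ B' (hardyProj (gvec k))⟫_ℂ := by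
    ext j k
    rw [Matrix.smul_apply, Matrix.of_apply, Matrix.of_apply, smul_eq_mul,
      inner_evenComp_gvec hΦi h hB hB' hb]
  rw [hM, Matrix.det_smul, Fintype.card_fin, det_secMat_hankelInverse h hB hB' h0,
    det_gram _ fun j k hjk => inner_ee_hardyProj_gvec hjk]

end Factorization

/-- Let `c` be even on the circle with absolutely summable Fourier coefficients and
factorization `c(e^{iθ}) = c₊(e^{−iθ}) G c₊(e^{iθ})`.  Define `b(cos θ) = c(e^{iθ})` and
`ψ(e^{iθ}) = c₊(e^{−iθ}) c₊(e^{iθ})⁻¹ χ(e^{iθ})`.  Then any bounded operator `I + H(ψ)`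
on ℓ²(ℕ) is invertible and for all `n ≥ 1`:
`det H_n[b] = Gⁿ · det[Pₙ (I + H(ψ))⁻¹ Pₙ]`. -/
theorem stmt7 (d : ℤ → ℂ) (hd : Summable fun k => ‖d k‖)
    (c : ℝ → ℂ)
    (hcdef : ∀ θ : ℝ, c θ = ∑' k : ℤ, d k * Complex.exp (Complex.I * k * θ))
    (heven : ∀ k : ℤ, d k = d (-k))
    (γ : ℕ → ℂ) (hγ : Summable fun k => ‖γ k‖)
    (cplus : ℂ → ℂ) (hcplus : ∀ z : ℂ, cplus z = ∑' k : ℕ, γ k * z ^ k)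
    (h0 : cplus 0 = 1)
    (hnz : ∀ z : ℂ, ‖z‖ ≤ 1 → cplus z ≠ 0)
    (G : ℂ)
    (hfact : ∀ θ : ℝ, c θ =
      cplus (Complex.exp (-(Complex.I * θ))) * G * cplus (Complex.exp (Complex.I * θ)))
    (b : ℝ → ℂ) (hb : ∀ θ : ℝ, b (Real.cos θ) = c θ)
    (ψ : ℝ → ℂ)
    (hψ : ∀ θ : ℝ, ψ θ =
      cplus (Complex.exp (-(Complex.I * θ))) *
        (cplus (Complex.exp (Complex.I * θ)))⁻¹ * chi θ)
    (A : l2 →L[ℂ] l2)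
    (hA : ∀ j k : ℕ, ent A j k =
      (if j = k then 1 else 0) + fc ψ ((j : ℤ) + k + 1)) :
    ∃ A' : l2 →L[ℂ] l2, A ∘L A' = 1 ∧ A' ∘L A = 1 ∧
      ∀ n : ℕ, 1 ≤ n →
        (Matrix.of fun j k : Fin n => bmom b ((j : ℕ) + k)).det
          = G ^ n * (Matrix.of fun j k : Fin n => ent A' j k).det := by
  have hΦ : DiffContOnCl ℂ cplus (Metric.ball 0 1) := by
    rw [funext hcplus]
    exact diffContOnCl_powerSeries hγ
  have hΦi : DiffContOnCl ℂ cplus⁻¹ (Metric.ball 0 1) := hΦ.inv fun z hz => by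
    rw [closure_ball _ one_ne_zero, mem_closedBall_zero_iff] at hz
    exact hnz z hz
  have h : ∀ z, ‖z‖ = 1 → cplus z * cplus⁻¹ z = 1 := fun z hz => mul_inv_cancel₀ (hnz z hz.le)
  obtain ⟨B, hB⟩ := isUnit_oneAddHankel
  have hBB' : oneAddHankel * (↑B⁻¹ : l2 →L[ℂ] l2) = 1 := by rw [← hB, Units.mul_inv]
  have hB'B : (↑B⁻¹ : l2 →L[ℂ] l2) * oneAddHankel = 1 := by rw [← hB, Units.inv_mul]
  have hAeq : A = oneAddHankelSymbol hΦ hΦi :=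
    clm_ext_ent fun j k => by rw [hA, ent_oneAddHankelSymbol hψ]
  refine ⟨hankelInverse hΦ hΦi ↑B⁻¹, ?_, ?_, fun n _ => ?_⟩
  · rw [hAeq]
    exact oneAddHankelSymbol_comp_inverse h hBB' hB'B
  · rw [hAeq]
    exact inverse_comp_oneAddHankelSymbol h hBB' hB'B
  · exact det_bmom h hBB' hB'B h0 (fun θ => by rw [hb, hfact]; ring) n

end
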